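/- Assume μ = 0 and let q ∈ (0,∞) (so θ_q = 0 < φ*). Then for all a ∈ ℕ₀, x ∈ ℕ with x > a, and f ∈ ℕ: Φ_q(x) − Φ_q(x + f) ≤ f (Φ_q(a) − Φ_q(a + 1)). -/

import Mathlib

open MeasureTheory Filter Set

/-- The probability generating function of the offspring distribution `p`. -/
noncomputable def ptilde (p : ℕ → ℝ) (z : ℝ) : ℝ := ∑' k, p k * z ^ k

/-- The p.g.f. of the immigration/culling mechanism: `rneg` is `r_{-1}`,
`r k` for `k ≥ 1` are the immigration probabilities (we require `r 0 = 0`). -/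
noncomputable def rtilde (rneg : ℝ) (r : ℕ → ℝ) (z : ℝ) : ℝ :=
  rneg / z + ∑' k, r k * z ^ k

/-- `f : ℕ → ℝ` is `q`-harmonic for the branching process with branching mechanism `p`
(rate `lam`) and immigration/culling mechanism `(rneg, r)` (rate `mu`). -/
def IsQHarmonic (lam mu q : ℝ) (p : ℕ → ℝ) (rneg : ℝ) (r : ℕ → ℝ) (f : ℕ → ℝ) : Prop :=
  ∀ x : ℕ, 1 ≤ x →
    (q + lam * x + mu) * f x
      = lam * x * (∑' k, p k * f (x + k - 1))
        + mu * (rneg * f (x - 1) + ∑' k, r k * f (x + k))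

/-- The harmonic function `Φ_q`; `φ` is the smallest fixed point of `ptilde p` in `(0,1]`
and `θ` is the delimiter `θ_q`. -/
noncomputable def Phi (lam mu : ℝ) (p : ℕ → ℝ) (rneg : ℝ) (r : ℕ → ℝ)
    (φ θ q : ℝ) (x : ℕ) : ℝ :=
  q * ∫ v in (0:ℝ)..φ,
      Real.exp (-∫ w in θ..v,
          (q + mu * (1 - rtilde rneg r w)) / (lam * |ptilde p w - w|))
        / (lam * |ptilde p v - v|) * v ^ x

/-- The harmonic function `Ψ_q`. -/
noncomputable def Psi (lam mu : ℝ) (p : ℕ → ℝ) (rneg : ℝ) (r : ℕ → ℝ)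
    (φ q : ℝ) (x : ℕ) : ℝ :=
  1 - q * ∫ v in φ..(1:ℝ),
      Real.exp (-∫ w in v..(1:ℝ),
          (q + mu * (1 - rtilde rneg r w)) / (lam * |ptilde p w - w|))
        / (lam * |ptilde p v - v|) * v ^ x

/-- Condition (E'): `∫_v^1 dz/(z - ptilde p z) < ∞` for some `v ∈ (φ, 1)`. -/
def CondE (p : ℕ → ℝ) (φ : ℝ) : Prop :=
  ∃ v, φ < v ∧ v < 1 ∧
    IntervalIntegrable (fun z => 1 / (z - ptilde p z)) MeasureTheory.volume v 1

/-!
With `ρ(v) = lam * |p̃(v) - v|` and `γ = q / ρ`, the function `Φ_q` is the moment sequence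
`x ↦ ∫ γ(v) exp(-∫₀ᵛ γ) v ^ x dv` over `(0, φ)`. Its weight is the derivative of the bounded
increasing function `v ↦ -exp(-∫₀ᵛ γ)`, hence integrable even though `γ` may blow up at `φ`. The
claim is then the integral of the pointwise inequality `v ^ x (1 - v ^ f) ≤ f v ^ a (1 - v)` on
`[0, 1]`, which combines `v ^ x ≤ v ^ a` with Bernoulli's inequality.
-/

theorem pow_sub_pow_add_le_mul_pow_sub_pow_succ {R : Type*} [CommRing R] [LinearOrder R]
    [IsStrictOrderedRing R] {v : R} (hv0 : 0 ≤ v) (hv1 : v ≤ 1) {a x : ℕ} (hax : a ≤ x) (n : ℕ) :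
    v ^ x - v ^ (x + n) ≤ n * (v ^ a - v ^ (a + 1)) := by
  have bernoulli : 1 + n * (v - 1) ≤ v ^ n :=
    one_add_mul_sub_le_pow ((neg_nonpos.2 zero_le_one).trans hv0) n
  calc v ^ x - v ^ (x + n) = v ^ x * (1 - v ^ n) := by ring
    _ ≤ v ^ a * (n * (1 - v)) :=
      mul_le_mul (pow_le_pow_of_le_one hv0 hv1 hax) (by linarith)
        (sub_nonneg.2 (pow_le_one₀ hv0 hv1)) (pow_nonneg hv0 a)
    _ = n * (v ^ a - v ^ (a + 1)) := by ring

section WeightedMoments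

variable {α : Type*} [MeasurableSpace α] {μ : Measure α} {w X : α → ℝ}

theorem integrable_mul_pow_of_mem_Icc (hw : Integrable w μ) (hX : AEStronglyMeasurable X μ)
    (hX01 : ∀ᵐ ω ∂μ, X ω ∈ Icc 0 1) (n : ℕ) : Integrable (fun ω ↦ w ω * X ω ^ n) μ := by
  refine hw.mul_bdd (c := 1) (hX.pow n) ?_
  filter_upwards [hX01] with ω hω
  rw [Real.norm_of_nonneg (pow_nonneg hω.1 n)]
  exact pow_le_one₀ hω.1 hω.2

theorem integral_mul_pow_sub_le (hw : Integrable w μ) (hw0 : 0 ≤ᵐ[μ] w)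
    (hX : AEStronglyMeasurable X μ) (hX01 : ∀ᵐ ω ∂μ, X ω ∈ Icc 0 1) {a x : ℕ} (hax : a ≤ x)
    (n : ℕ) :
    ∫ ω, w ω * X ω ^ x ∂μ - ∫ ω, w ω * X ω ^ (x + n) ∂μ ≤
      n * (∫ ω, w ω * X ω ^ a ∂μ - ∫ ω, w ω * X ω ^ (a + 1) ∂μ) := by
  have hint := integrable_mul_pow_of_mem_Icc hw hX hX01
  rw [← integral_sub (hint _) (hint _), ← integral_sub (hint _) (hint _), ← integral_const_mul]
  refine integral_mono_ae ((hint _).sub (hint _)) (((hint _).sub (hint _)).const_mul _) ?_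
  filter_upwards [hw0, hX01] with ω hwω hω
  calc w ω * X ω ^ x - w ω * X ω ^ (x + n) = w ω * (X ω ^ x - X ω ^ (x + n)) := by ring
    _ ≤ w ω * (n * (X ω ^ a - X ω ^ (a + 1))) :=
      mul_le_mul_of_nonneg_left (pow_sub_pow_add_le_mul_pow_sub_pow_succ hω.1 hω.2 hax n) hwω
    _ = n * (w ω * X ω ^ a - w ω * X ω ^ (a + 1)) := by ring

end WeightedMoments

theorem integrableOn_Ioc_deriv_of_nonneg_of_bounded {g g' : ℝ → ℝ} {a b C : ℝ} (hab : a < b)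
    (hcont : ContinuousOn g (Ico a b)) (hderiv : ∀ v ∈ Ioo a b, HasDerivAt g (g' v) v)
    (hg' : ∀ v ∈ Ioo a b, 0 ≤ g' v) (hC : ∀ v ∈ Ioo a b, g v ≤ C) :
    IntegrableOn g' (Ioc a b) := by
  obtain ⟨u, -, hu, hu_lim⟩ := exists_seq_strictMono_tendsto' hab
  have hcont_u (i : ℕ) : ContinuousOn g (Icc a (u i)) :=
    hcont.mono (Icc_subset_Ico_right (hu i).2)
  have hsub (i : ℕ) : Ioo a (u i) ⊆ Ioo a b := Ioo_subset_Ioo_right (hu i).2.le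
  have hint (i : ℕ) : IntegrableOn g' (Ioc a (u i)) :=
    intervalIntegral.integrableOn_deriv_of_nonneg (hcont_u i)
      (fun v hv ↦ hderiv v (hsub i hv)) fun v hv ↦ hg' v (hsub i hv)
  refine integrableOn_Ioc_of_intervalIntegral_norm_bounded_right (I := C - g a) hint hu_lim
    (Eventually.of_forall fun i ↦ ?_)
  have hle : a ≤ u i := (hu i).1.le
  calc ∫ v in Ioc a (u i), ‖g' v‖ = ∫ v in Ioc a (u i), g' v :=
        setIntegral_congr_fun measurableSet_Ioc fun v hv ↦
          Real.norm_of_nonneg (hg' v ⟨hv.1, hv.2.trans_lt (hu i).2⟩)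
    _ = g (u i) - g a := by
      rw [← intervalIntegral.integral_of_le hle]
      exact intervalIntegral.integral_eq_sub_of_hasDerivAt_of_le hle (hcont_u i)
        (fun v hv ↦ hderiv v (hsub i hv))
        ((intervalIntegrable_iff_integrableOn_Ioc_of_le hle).2 (hint i))
    _ ≤ C - g a := sub_le_sub_right (hC (u i) (hu i)) (g a)

/-- The density `γ(v) exp(-∫ₐᵛ γ)` of the first event after `a` of a point process with hazard
rate `γ`. -/
noncomputable def hazardDensity (γ : ℝ → ℝ) (a v : ℝ) : ℝ :=
  γ v * Real.exp (-∫ w in a..v, γ w)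

section HazardDensity

variable {γ : ℝ → ℝ} {a b : ℝ}

theorem intervalIntegrable_of_continuousOn_Ico (hγ : ContinuousOn γ (Ico a b)) {v : ℝ}
    (hv : v ∈ Ico a b) : IntervalIntegrable γ volume a v :=
  (hγ.mono (Icc_subset_Ico_right hv.2)).intervalIntegrable_of_Icc hv.1

theorem continuousOn_Ico_primitive (hγ : ContinuousOn γ (Ico a b)) :
    ContinuousOn (fun v ↦ ∫ w in a..v, γ w) (Ico a b) := by
  intro v hv
  obtain ⟨c, hvc, hcb⟩ := exists_between hv.2
  have hac : a ≤ c := hv.1.trans hvc.le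
  have hcont : ContinuousOn (fun v ↦ ∫ w in a..v, γ w) (uIcc a c) :=
    intervalIntegral.continuousOn_primitive_interval'
      (intervalIntegrable_of_continuousOn_Ico hγ ⟨hac, hcb⟩) left_mem_uIcc
  rw [uIcc_of_le hac] at hcont
  exact (hcont v ⟨hv.1, hvc.le⟩).mono_of_mem_nhdsWithin
    (mem_of_superset (inter_mem_nhdsWithin _ (Iic_mem_nhds hvc)) fun _ hx ↦ ⟨hx.1.1, hx.2⟩)

theorem hasDerivAt_primitive_of_continuousOn_Ico (hγ : ContinuousOn γ (Ico a b)) {v : ℝ}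
    (hv : v ∈ Ioo a b) : HasDerivAt (fun v ↦ ∫ w in a..v, γ w) (γ v) v :=
  intervalIntegral.integral_hasDerivAt_right
    (intervalIntegrable_of_continuousOn_Ico hγ (Ioo_subset_Ico_self hv))
    ((hγ.mono Ioo_subset_Ico_self).stronglyMeasurableAtFilter isOpen_Ioo v hv)
    (hγ.continuousAt (Ico_mem_nhds hv.1 hv.2))

theorem hasDerivAt_neg_exp_neg_primitive (hγ : ContinuousOn γ (Ico a b)) {v : ℝ}
    (hv : v ∈ Ioo a b) :
    HasDerivAt (fun v ↦ -Real.exp (-∫ w in a..v, γ w)) (hazardDensity γ a v) v := by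
  refine (hasDerivAt_primitive_of_continuousOn_Ico hγ hv).fun_neg.exp.fun_neg.congr_deriv ?_
  rw [hazardDensity]
  ring

theorem hazardDensity_nonneg {v : ℝ} (hγ : 0 ≤ γ v) : 0 ≤ hazardDensity γ a v :=
  mul_nonneg hγ (Real.exp_pos _).le

theorem integrableOn_hazardDensity (hab : a < b) (hγ : ContinuousOn γ (Ico a b))
    (hγ0 : ∀ v ∈ Ioo a b, 0 ≤ γ v) : IntegrableOn (hazardDensity γ a) (Ioc a b) :=
  integrableOn_Ioc_deriv_of_nonneg_of_bounded hab (continuousOn_Ico_primitive hγ).neg.rexp.neg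
    (fun _ ↦ hasDerivAt_neg_exp_neg_primitive hγ) (fun v hv ↦ hazardDensity_nonneg (hγ0 v hv))
    fun _ _ ↦ neg_nonpos.2 (Real.exp_pos _).le

end HazardDensity

theorem summable_of_tsum_ne_zero {ι M : Type*} [AddCommMonoid M] [TopologicalSpace M] {u : ι → M}
    (h : ∑' i, u i ≠ 0) : Summable u :=
  not_imp_comm.1 tsum_eq_zero_of_not_summable h

section Branching

variable {lam φ q : ℝ} {p : ℕ → ℝ}

theorem continuousOn_ptilde (hp : Summable p) : ContinuousOn (ptilde p) (Icc (-1) 1) := by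
  refine continuousOn_tsum (u := fun k ↦ |p k|) (fun k ↦ by fun_prop) hp.abs fun k z hz ↦ ?_
  rw [norm_mul, norm_pow, Real.norm_eq_abs, Real.norm_eq_abs]
  exact mul_le_of_le_one_right (abs_nonneg _) (pow_le_one₀ (abs_nonneg z) (abs_le.2 hz))

theorem ptilde_zero (p : ℕ → ℝ) : ptilde p 0 = p 0 := by
  rw [ptilde, tsum_eq_single 0 fun k hk ↦ by rw [zero_pow hk, mul_zero], pow_zero, mul_one]

theorem ptilde_ne_self_of_mem_Ico (hp0 : p 0 ≠ 0) (hlo : ∀ z, 0 < z → z < φ → z < ptilde p z)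
    {z : ℝ} (hz : z ∈ Ico 0 φ) : ptilde p z ≠ z := by
  rcases hz.1.eq_or_lt with rfl | hz0
  · rwa [ptilde_zero]
  · exact (hlo z hz0 hz.2).ne'

/-- The rate `γ_q(v) = q / (lam * |p̃(v) - v|)` of the paper in the absence of immigration. -/
noncomputable def gammaRate (lam q : ℝ) (p : ℕ → ℝ) (v : ℝ) : ℝ :=
  q / (lam * |ptilde p v - v|)

theorem gammaRate_nonneg (hlam : 0 ≤ lam) (hq : 0 ≤ q) (v : ℝ) : 0 ≤ gammaRate lam q p v := by
  unfold gammaRate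
  positivity

theorem continuousOn_gammaRate (hlam : lam ≠ 0) (hp : Summable p) {s : Set ℝ}
    (hs : s ⊆ Icc (-1) 1) (hfix : ∀ z ∈ s, ptilde p z ≠ z) :
    ContinuousOn (gammaRate lam q p) s :=
  continuousOn_const.div
    (continuousOn_const.mul (((continuousOn_ptilde hp).mono hs).sub continuousOn_id).abs)
    fun z hz ↦ mul_ne_zero hlam (abs_ne_zero.2 (sub_ne_zero.2 (hfix z hz)))

theorem Phi_zero_eq_integral_hazardDensity (lam : ℝ) (p : ℕ → ℝ) (rneg : ℝ) (r : ℕ → ℝ)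
    (φ θ q : ℝ) (x : ℕ) :
    Phi lam 0 p rneg r φ θ q x =
      ∫ v in (0 : ℝ)..φ, hazardDensity (gammaRate lam q p) θ v * v ^ x := by
  rw [Phi, ← intervalIntegral.integral_const_mul]
  refine intervalIntegral.integral_congr fun v _ ↦ ?_
  simp only [hazardDensity, gammaRate, zero_mul, add_zero]
  ring

theorem stmt18_general (hlam : 0 < lam) (hp : Summable p) (hφ0 : 0 < φ) (hφ1 : φ ≤ 1)
    (hfix : ∀ z ∈ Ico 0 φ, ptilde p z ≠ z) (hq : 0 < q) (rneg : ℝ) (r : ℕ → ℝ) {a x : ℕ}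
    (hax : a ≤ x) (f : ℕ) :
    Phi lam 0 p rneg r φ 0 q x - Phi lam 0 p rneg r φ 0 q (x + f) ≤
      f * (Phi lam 0 p rneg r φ 0 q a - Phi lam 0 p rneg r φ 0 q (a + 1)) := by
  have hsub : Ico 0 φ ⊆ Icc (-1) 1 := fun z hz ↦ ⟨by linarith [hz.1], hz.2.le.trans hφ1⟩
  have hγ0 (v : ℝ) : 0 ≤ gammaRate lam q p v := gammaRate_nonneg hlam.le hq.le v
  have hint : IntegrableOn (hazardDensity (gammaRate lam q p) 0) (Ioc 0 φ) :=
    integrableOn_hazardDensity hφ0 (continuousOn_gammaRate hlam.ne' hp hsub hfix)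
      fun v _ ↦ hγ0 v
  have hmem : ∀ᵐ v ∂volume.restrict (Ioc 0 φ), v ∈ Icc (0 : ℝ) 1 :=
    (ae_restrict_mem measurableSet_Ioc).mono fun v hv ↦ ⟨hv.1.le, hv.2.trans hφ1⟩
  simp only [Phi_zero_eq_integral_hazardDensity, intervalIntegral.integral_of_le hφ0.le]
  exact integral_mul_pow_sub_le hint (Eventually.of_forall fun v ↦ hazardDensity_nonneg (hγ0 v))
    aestronglyMeasurable_id hmem hax f

end Branching

/-- with `μ = 0` (so `θ_q = 0 < φ*`), for all `a ∈ ℕ`, `x ∈ ℕ` with `x > a`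
and `f ∈ ℕ`, `f ≥ 1`: `Φ_q(x) - Φ_q(x + f) ≤ f (Φ_q(a) - Φ_q(a + 1))`. -/
theorem stmt18 (lam : ℝ) (p : ℕ → ℝ) (φ q : ℝ)
    (hlam : 0 < lam)
    (hp : ∀ k, 0 ≤ p k) (hpsum : ∑' k, p k = 1) (hp0 : 0 < p 0) (hp1 : p 1 = 0)
    (hp0lt : p 0 < 1)
    (hφ0 : 0 < φ) (hφ1 : φ ≤ 1) (hφfix : ptilde p φ = φ)
    (hφlo : ∀ z : ℝ, 0 < z → z < φ → z < ptilde p z)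
    (hφhi : ∀ z : ℝ, φ < z → z < 1 → ptilde p z < z)
    (hq : 0 < q) :
    ∀ a x : ℕ, a < x → ∀ f : ℕ, 1 ≤ f →
      Phi lam 0 p 0 (fun _ => 0) φ 0 q x - Phi lam 0 p 0 (fun _ => 0) φ 0 q (x + f)
        ≤ f * (Phi lam 0 p 0 (fun _ => 0) φ 0 q a
            - Phi lam 0 p 0 (fun _ => 0) φ 0 q (a + 1)) := by
  intro a x hax f _
  exact stmt18_general hlam (summable_of_tsum_ne_zero (hpsum.trans_ne one_ne_zero)) hφ0 hφ1
    (fun _ ↦ ptilde_ne_self_of_mem_Ico hp0.ne' hφlo) hq 0 _ hax.le f
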